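/- The Takeuchi element τ = Σ_F (−1)^{rk(F)} H_F of the Tits algebra ℝΣ[𝒜], where the sum is over ALL faces F of 𝒜, is characteristic of parameter −1; that is, for every flat X of 𝒜, Σ_{F : supp(F) ⊆ X} (−1)^{rk(F)} = (−1)^{rk(X)}. -/

import Mathlib

open Finset MeasureTheory

noncomputable section

namespace CharElts

/-- Ambient Euclidean space `ℝ^n`. -/
abbrev V (n : ℕ) := EuclideanSpace ℝ (Fin n)

/-- An affine functional on `ℝ^n`; a hyperplane is its zero set. -/
abbrev AffForm (n : ℕ) := V n →ᵃ[ℝ] ℝ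

/-- The hyperplane determined by an affine functional. -/
def hypSet {n : ℕ} (ℓ : AffForm n) : Set (V n) := {x | ℓ x = 0}

variable {n : ℕ} (𝒜 : Finset (AffForm n))

/-- Index type for the hyperplanes of the arrangement. -/
abbrev Idx := {ℓ : AffForm n // ℓ ∈ 𝒜}

/-- The (possibly empty) set cut out by a sign vector `σ`. -/
def faceSet (σ : Idx 𝒜 → SignType) : Set (V n) :=
  {x | ∀ ℓ : Idx 𝒜, SignType.sign (ℓ.1 x) = σ ℓ}

/-- A face of the arrangement: a sign vector whose face set is nonempty. -/
@[ext] structure Face where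
  sgn : Idx 𝒜 → SignType
  nonempty : (faceSet 𝒜 sgn).Nonempty

open Classical in
instance : Fintype (Face 𝒜) :=
  Fintype.ofInjective Face.sgn (fun F G h => by cases F; cases G; simpa using h)

/-- The underlying point set of a face. -/
def Face.carrier (F : Face 𝒜) : Set (V n) := faceSet 𝒜 F.sgn

/-- A flat: a nonempty intersection of some subcollection of the hyperplanes
(the empty intersection gives all of `ℝ^n`). -/
def IsFlat (X : Set (V n)) : Prop :=
  X.Nonempty ∧ ∃ P : Idx 𝒜 → Prop, X = ⋂ ℓ ∈ {ℓ : Idx 𝒜 | P ℓ}, hypSet ℓ.1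

/-- The poset of flats, ordered by inclusion. -/
def Flat := {X : Set (V n) // IsFlat 𝒜 X}

instance : PartialOrder (Flat 𝒜) :=
  inferInstanceAs (PartialOrder {X : Set (V n) // IsFlat 𝒜 X})

lemma flat_eq_inter (X : Flat 𝒜) :
    X.1 = ⋂ ℓ ∈ {ℓ : Idx 𝒜 | X.1 ⊆ hypSet ℓ.1}, hypSet ℓ.1 := by
  obtain ⟨Z, hne, P, rfl⟩ := X
  apply subset_antisymm
  · intro x hx
    simp only [Set.mem_iInter, Set.mem_setOf_eq]
    intro ℓ hℓ
    exact hℓ hx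
  · intro x hx
    simp only [Set.mem_iInter, Set.mem_setOf_eq] at hx ⊢
    intro ℓ hℓ
    refine hx ℓ ?_
    intro y hy
    simp only [Set.mem_iInter, Set.mem_setOf_eq] at hy
    exact hy ℓ hℓ

open Classical in
instance : Fintype (Flat 𝒜) :=
  Fintype.ofInjective (fun X : Flat 𝒜 => {ℓ : Idx 𝒜 | X.1 ⊆ hypSet ℓ.1}) <| by
    intro X Y h
    dsimp only at h
    apply Subtype.ext
    rw [flat_eq_inter 𝒜 X, flat_eq_inter 𝒜 Y, h]

/-- The top flat: the whole ambient space. -/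
def topFlat : Flat 𝒜 :=
  ⟨Set.univ, ⟨⟨0, trivial⟩, fun _ => False, by simp⟩⟩

/-- The support of a face: the intersection of the hyperplanes on which it lies. -/
def supp (F : Face 𝒜) : Flat 𝒜 :=
  ⟨⋂ ℓ ∈ {ℓ : Idx 𝒜 | F.sgn ℓ = 0}, hypSet ℓ.1, by
    constructor
    · obtain ⟨x, hx⟩ := F.nonempty
      refine ⟨x, ?_⟩
      simp only [Set.mem_iInter, Set.mem_setOf_eq]
      intro ℓ hℓ
      have h0 := hx ℓ
      rw [hℓ] at h0
      simpa [hypSet, sign_eq_zero_iff] using h0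
    · exact ⟨fun ℓ => F.sgn ℓ = 0, rfl⟩⟩

/-- The dimension of (the affine hull of) a subset of `ℝ^n`. -/
def dimS (X : Set (V n)) : ℕ := Module.finrank ℝ (vectorSpan ℝ X)

open Classical in
/-- An element `w = Σ_F w^F H_F` of the Tits algebra (recorded by its coefficient
vector) is *characteristic of parameter `t`* if for every flat `X`, the sum of the
coefficients of the faces with support contained in `X` equals `t ^ rk X`,
where `rk X = dim X - d` and `d` is the common dimension of the minimal flats. -/
def IsCharacteristic (d : ℕ) (w : Face 𝒜 → ℝ) (t : ℝ) : Prop :=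
  ∀ X : Flat 𝒜,
    (∑ F : Face 𝒜, if (supp 𝒜 F).1 ⊆ X.1 then w F else 0) = t ^ (dimS X.1 - d)

/-- The sign vector of the Tits product `FG` of two faces. -/
def combineSgn {I : Type*} (σ τ : I → SignType) : I → SignType :=
  fun ℓ => if σ ℓ = 0 then τ ℓ else σ ℓ

open Classical in
/-- The product of the Tits algebra, on coefficient vectors:
`(u·v)^C = Σ_{F,G : FG = C} u^F v^G`, extending `H_F · H_G = H_{FG}` bilinearly. -/
def mulT (u v : Face 𝒜 → ℝ) : Face 𝒜 → ℝ :=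
  fun C => ∑ F : Face 𝒜, ∑ G : Face 𝒜,
    if combineSgn F.sgn G.sgn = C.sgn then u F * v G else 0

open Classical in
/-- The basis element `H_F` of the Tits algebra, as a coefficient vector. -/
def unitV (F : Face 𝒜) : Face 𝒜 → ℝ := fun G => if G = F then 1 else 0

/-- A chamber: a face whose sign vector is nowhere zero. -/
def IsChamber (F : Face 𝒜) : Prop := ∀ ℓ : Idx 𝒜, F.sgn ℓ ≠ 0

open Classical in
/-- `IsMoebius 𝒜 μ` states that `μ` is the Möbius function of the poset of
flats of `𝒜` (these conditions determine `μ` uniquely). -/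
def IsMoebius (μ : Flat 𝒜 → Flat 𝒜 → ℝ) : Prop :=
  (∀ X, μ X X = 1) ∧
  (∀ X Y : Flat 𝒜, X < Y →
    (∑ Z : Flat 𝒜, if X ≤ Z ∧ Z ≤ Y then μ X Z else 0) = 0) ∧
  (∀ X Y : Flat 𝒜, ¬ X ≤ Y → μ X Y = 0)

open Classical in
/-- `χ(𝒜^X, t) = Σ_{Y ≤ X} μ(Y, X) t^{rk Y}`: the characteristic polynomial of the
arrangement under the flat `X`.  Taking `X = ⊤` gives the characteristic
polynomial of `𝒜` itself. -/
def charPolyUnder (μ : Flat 𝒜 → Flat 𝒜 → ℝ) (d : ℕ) (X : Flat 𝒜) (t : ℝ) : ℝ :=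
  ∑ Y : Flat 𝒜, if Y ≤ X then μ Y X * t ^ (dimS Y.1 - d) else 0

/-- The space of directions `L = ⋂_{H ∈ 𝒜} dir(H)`: the intersection of the kernels of
the linear parts of the defining functionals. -/
def dirL : Submodule ℝ (V n) := ⨅ ℓ : Idx 𝒜, LinearMap.ker ℓ.1.linear

/-- A face is essentially bounded if its image in `ℝ^n / L` is bounded. -/
def EssBounded (F : Face 𝒜) : Prop :=
  Bornology.IsBounded ((dirL 𝒜).mkQ '' F.carrier)

/-- A hyperplane (zero set of a nonconstant affine functional) is nonempty. -/
lemma hyp_nonempty (ℓ : AffForm n) (h : ℓ.linear ≠ 0) : (hypSet ℓ).Nonempty := by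
  obtain ⟨v, hv⟩ : ∃ v, ℓ.linear v ≠ 0 := by
    by_contra hc
    push_neg at hc
    exact h (LinearMap.ext fun v => hc v)
  refine ⟨((-ℓ 0) / (ℓ.linear v)) • v, ?_⟩
  have hdecomp : ℓ (((-ℓ 0) / (ℓ.linear v)) • v)
      = ℓ.linear (((-ℓ 0) / (ℓ.linear v)) • v) + ℓ 0 := by
    conv_lhs => rw [show ((-ℓ 0) / (ℓ.linear v)) • v = ((-ℓ 0) / (ℓ.linear v)) • v +ᵥ (0 : V n)
      from (add_zero _).symm]
    rw [AffineMap.map_vadd]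
    rfl
  show ℓ _ = 0
  rw [hdecomp, LinearMap.map_smul, smul_eq_mul, div_mul_cancel₀ _ hv, neg_add_cancel]

/-!
Give a convex, relatively open set `C` the weight `(-1) ^ dim C`, and the empty set the weight `0`;
this is the Euler characteristic with compact supports.  The point is that it is additive when `C`
is cut by the sign of an affine functional `ℓ`: either `ℓ` has constant sign on `C` and only one
piece is nonempty, or `ℓ` takes both strict signs, and then the pieces have dimensions `k`, `k - 1`,
`k` with `k = dim C`, so that their weights sum to `(-1) ^ k`.  Cutting a flat `X` by all the
hyperplanes leaves exactly the faces with support contained in `X`, hence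
`(-1) ^ dim X = ∑_F (-1) ^ dim F`; dividing by `(-1) ^ d` turns dimensions into ranks.
-/

open scoped Topology

section LinearAlgebra

lemma map_add_smul_eq {k E F : Type*} [Ring k] [AddCommGroup E] [Module k E] [AddCommGroup F]
    [Module k F] (f : E →ᵃ[k] F) (x w : E) (t : k) :
    f (x + t • w) = f x + t • f.linear w := by
  rw [add_comm x, ← vadd_eq_add, f.map_vadd, map_smul, vadd_eq_add, add_comm]

lemma vectorSpan_le_ker_linear {k E F : Type*} [Ring k] [AddCommGroup E] [Module k E]
    [AddCommGroup F] [Module k F] {f : E →ᵃ[k] F} {C : Set E} (h : ∀ x ∈ C, f x = 0) :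
    vectorSpan k C ≤ LinearMap.ker f.linear := by
  rw [vectorSpan_def, Submodule.span_le]
  rintro _ ⟨x, hx, y, hy, rfl⟩
  rw [SetLike.mem_coe, LinearMap.mem_ker, AffineMap.linearMap_vsub, h x hx, h y hy, vsub_self]

lemma finrank_inf_ker_add_one {K E : Type*} [Field K] [AddCommGroup E] [Module K E]
    {W : Submodule K E} [FiniteDimensional K W] {φ : Module.Dual K E}
    (hφ : ¬ W ≤ LinearMap.ker φ) :
    Module.finrank K (W ⊓ LinearMap.ker φ : Submodule K E) + 1 = Module.finrank K W := by
  have hne : φ.domRestrict W ≠ 0 := fun h0 =>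
    hφ fun w hw => LinearMap.congr_fun h0 ⟨w, hw⟩
  rw [← Module.Dual.finrank_ker_add_one_of_ne_zero hne, LinearMap.ker_domRestrict,
    ← Submodule.finrank_map_subtype_eq, Submodule.map_comap_subtype]

end LinearAlgebra

section RelativelyOpen

variable {E : Type*} [AddCommGroup E] [Module ℝ E]

lemma eventually_sign_add_smul_eq (ℓ : E →ᵃ[ℝ] ℝ) {x w : E}
    (h : ℓ x = 0 → ℓ.linear w = 0) :
    ∀ᶠ t in 𝓝 (0 : ℝ), SignType.sign (ℓ (x + t • w)) = SignType.sign (ℓ x) := by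
  simp only [map_add_smul_eq, smul_eq_mul]
  by_cases hx : ℓ x = 0
  · simp [h hx]
  · have hcont : Filter.Tendsto (fun t : ℝ => ℓ x + t * ℓ.linear w) (𝓝 0) (𝓝 (ℓ x)) :=
      Continuous.tendsto' (by fun_prop) _ _ (by simp)
    rcases lt_or_gt_of_ne hx with hneg | hpos
    · filter_upwards [hcont.eventually_lt_const hneg] with t ht
      rw [sign_neg ht, sign_neg hneg]
    · filter_upwards [hcont.eventually_const_lt hpos] with t ht
      rw [sign_pos ht, sign_pos hpos]

lemma mem_vectorSpan_of_eventually_mem {C : Set E} {x w : E} (hx : x ∈ C)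
    (h : ∀ᶠ t in 𝓝 (0 : ℝ), x + t • w ∈ C) : w ∈ vectorSpan ℝ C := by
  obtain ⟨t, htC, ht⟩ :=
    ((h.filter_mono nhdsWithin_le_nhds).and (self_mem_nhdsWithin (s := Set.Ioi (0 : ℝ)))).exists
  have hmem : t • w ∈ vectorSpan ℝ C := by simpa using vsub_mem_vectorSpan ℝ htC hx
  exact ((vectorSpan ℝ C).smul_mem_iff (ne_of_gt ht)).1 hmem

/-- `C` is open in its affine span.  This is tested along lines, so that no topology on `E` is
needed; in finite dimension it agrees with relative openness for convex `C`. -/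
def IsRelativelyOpen (C : Set E) : Prop :=
  ∀ x ∈ C, ∀ w ∈ vectorSpan ℝ C, ∀ᶠ t in 𝓝 (0 : ℝ), x + t • w ∈ C

namespace IsRelativelyOpen

variable {C : Set E}

lemma inter_sign_eq (hC : IsRelativelyOpen C) (ℓ : E →ᵃ[ℝ] ℝ) (s : SignType) :
    IsRelativelyOpen (C ∩ {x | SignType.sign (ℓ x) = s}) := by
  rintro x ⟨hxC, rfl⟩ w hw
  have hlin : ℓ x = 0 → ℓ.linear w = 0 := fun h0 =>
    vectorSpan_le_ker_linear (fun y hy => sign_eq_zero_iff.1 (by rw [hy.2, h0, sign_zero])) hw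
  exact (hC x hxC w (vectorSpan_mono ℝ Set.inter_subset_left hw)).and
    (eventually_sign_add_smul_eq ℓ hlin)

lemma vectorSpan_inter_sign_eq_of_ne_zero (hC : IsRelativelyOpen C) {ℓ : E →ᵃ[ℝ] ℝ} {s : SignType}
    (hs : s ≠ 0) (hne : (C ∩ {x | SignType.sign (ℓ x) = s}).Nonempty) :
    vectorSpan ℝ (C ∩ {x | SignType.sign (ℓ x) = s}) = vectorSpan ℝ C := by
  refine (vectorSpan_mono ℝ Set.inter_subset_left).antisymm fun w hw => ?_
  obtain ⟨x, hxC, rfl⟩ := hne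
  exact mem_vectorSpan_of_eventually_mem ⟨hxC, rfl⟩ <| (hC x hxC w hw).and <|
    eventually_sign_add_smul_eq ℓ fun h0 => absurd h0 (sign_ne_zero.1 hs)

lemma vectorSpan_inter_sign_eq_zero (hC : IsRelativelyOpen C) {ℓ : E →ᵃ[ℝ] ℝ}
    (hne : (C ∩ {x | SignType.sign (ℓ x) = 0}).Nonempty) :
    vectorSpan ℝ (C ∩ {x | SignType.sign (ℓ x) = 0}) =
      vectorSpan ℝ C ⊓ LinearMap.ker ℓ.linear := by
  refine le_antisymm (le_inf (vectorSpan_mono ℝ Set.inter_subset_left)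
    (vectorSpan_le_ker_linear fun x hx => sign_eq_zero_iff.1 hx.2)) fun w hw => ?_
  obtain ⟨x, hxC, hx0⟩ := hne
  refine mem_vectorSpan_of_eventually_mem ⟨hxC, hx0⟩ ((hC x hxC w hw.1).and ?_)
  exact (eventually_sign_add_smul_eq ℓ fun _ => hw.2).mono fun _ ht => ht.trans hx0

lemma exists_sign_eq_of_nonneg (hC : IsRelativelyOpen C) {ℓ : E →ᵃ[ℝ] ℝ}
    (hℓ : ∀ x ∈ C, 0 ≤ ℓ x) : ∃ s, ∀ x ∈ C, SignType.sign (ℓ x) = s := by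
  by_cases hzero : ∃ x ∈ C, ℓ x = 0
  · obtain ⟨x, hx, hx0⟩ := hzero
    refine ⟨0, fun y hy => sign_eq_zero_iff.2 ((hℓ y hy).antisymm' ?_)⟩
    -- Moving from `x` slightly away from `y` stays in `C`, where `ℓ` must not become negative.
    have hnear := hC x hx (y -ᵥ x) (vsub_mem_vectorSpan ℝ hy hx)
    obtain ⟨t, htC, ht⟩ :=
      ((hnear.filter_mono nhdsWithin_le_nhds).and
        (self_mem_nhdsWithin (s := Set.Iio (0 : ℝ)))).exists
    have hnonneg := hℓ _ htC
    rw [map_add_smul_eq, AffineMap.linearMap_vsub, hx0, vsub_eq_sub, sub_zero, zero_add,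
      smul_eq_mul] at hnonneg
    exact nonpos_of_mul_nonneg_right hnonneg ht
  · push Not at hzero
    exact ⟨1, fun x hx => sign_pos ((hℓ x hx).lt_of_ne (hzero x hx).symm)⟩

lemma exists_sign_eq_or_exists_neg_and_pos (hC : IsRelativelyOpen C) (ℓ : E →ᵃ[ℝ] ℝ) :
    (∃ s, ∀ x ∈ C, SignType.sign (ℓ x) = s) ∨ (∃ x ∈ C, ℓ x < 0) ∧ ∃ y ∈ C, 0 < ℓ y := by
  by_cases hneg : ∃ x ∈ C, ℓ x < 0
  · by_cases hpos : ∃ y ∈ C, 0 < ℓ y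
    · exact Or.inr ⟨hneg, hpos⟩
    · push Not at hpos
      obtain ⟨s, hs⟩ := hC.exists_sign_eq_of_nonneg (ℓ := -ℓ) fun x hx => neg_nonneg.2 (hpos x hx)
      refine Or.inl ⟨-s, fun x hx => ?_⟩
      rw [← hs x hx, AffineMap.coe_neg, Pi.neg_apply, Left.sign_neg, neg_neg]
  · push Not at hneg
    exact Or.inl (hC.exists_sign_eq_of_nonneg hneg)

end IsRelativelyOpen

open Classical in
/-- The Euler characteristic with compact supports of a convex relatively open set `C`: the sign
`(-1) ^ dim C`, or `0` when `C` is empty. -/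
def eulerChar (C : Set E) : ℤ :=
  if C.Nonempty then (-1) ^ Module.finrank ℝ (vectorSpan ℝ C) else 0

lemma eulerChar_empty : eulerChar (∅ : Set E) = 0 :=
  if_neg Set.not_nonempty_empty

lemma eulerChar_of_nonempty {C : Set E} (hC : C.Nonempty) :
    eulerChar C = (-1) ^ Module.finrank ℝ (vectorSpan ℝ C) :=
  if_pos hC

lemma convex_setOf_sign_eq (ℓ : E →ᵃ[ℝ] ℝ) (s : SignType) :
    Convex ℝ {x | SignType.sign (ℓ x) = s} :=
  (Set.ordConnected_singleton.preimage_mono SignType.sign.monotone).convex.affine_preimage ℓ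

lemma eulerChar_eq_sum_inter_sign_of_neg_of_pos [FiniteDimensional ℝ E] {C : Set E}
    (hconv : Convex ℝ C) (hC : IsRelativelyOpen C) {ℓ : E →ᵃ[ℝ] ℝ} {a b : E}
    (ha : a ∈ C) (hℓa : ℓ a < 0) (hb : b ∈ C) (hℓb : 0 < ℓ b) :
    eulerChar C = ∑ s : SignType, eulerChar (C ∩ {x | SignType.sign (ℓ x) = s}) := by
  obtain ⟨z, hz, hℓz⟩ : ∃ z ∈ C, ℓ z = 0 :=
    (hconv.affine_image ℓ).ordConnected.out ⟨a, ha, rfl⟩ ⟨b, hb, rfl⟩ ⟨hℓa.le, hℓb.le⟩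
  have hneg : (C ∩ {x | SignType.sign (ℓ x) = -1}).Nonempty := ⟨a, ha, sign_neg hℓa⟩
  have hpos : (C ∩ {x | SignType.sign (ℓ x) = 1}).Nonempty := ⟨b, hb, sign_pos hℓb⟩
  have hzero : (C ∩ {x | SignType.sign (ℓ x) = 0}).Nonempty :=
    ⟨z, hz, sign_eq_zero_iff.2 hℓz⟩
  have hker : ¬ vectorSpan ℝ C ≤ LinearMap.ker ℓ.linear := fun hle => by
    have hba := LinearMap.mem_ker.1 (hle (vsub_mem_vectorSpan ℝ hb ha))
    rw [AffineMap.linearMap_vsub, vsub_eq_sub] at hba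
    linarith
  rw [SignType.univ_eq, Finset.sum_insert (by decide), Finset.sum_insert (by decide),
    Finset.sum_singleton, eulerChar_of_nonempty ⟨a, ha⟩, eulerChar_of_nonempty hneg,
    eulerChar_of_nonempty hpos, eulerChar_of_nonempty hzero,
    hC.vectorSpan_inter_sign_eq_of_ne_zero (by decide) hneg,
    hC.vectorSpan_inter_sign_eq_of_ne_zero (by decide) hpos,
    hC.vectorSpan_inter_sign_eq_zero hzero, ← finrank_inf_ker_add_one hker]
  ring

lemma eulerChar_eq_sum_inter_sign [FiniteDimensional ℝ E] {C : Set E} (hconv : Convex ℝ C)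
    (hC : IsRelativelyOpen C) (ℓ : E →ᵃ[ℝ] ℝ) :
    eulerChar C = ∑ s : SignType, eulerChar (C ∩ {x | SignType.sign (ℓ x) = s}) := by
  rcases hC.exists_sign_eq_or_exists_neg_and_pos ℓ with
    ⟨s, hs⟩ | ⟨⟨a, ha, hℓa⟩, b, hb, hℓb⟩
  · have hself : C ∩ {x | SignType.sign (ℓ x) = s} = C := Set.inter_eq_left.2 hs
    rw [Fintype.sum_eq_single s, hself]
    intro s' hne
    have hempty : C ∩ {x | SignType.sign (ℓ x) = s'} = ∅ :=
      Set.eq_empty_of_forall_notMem fun x hx => hne (hx.2.symm.trans (hs x hx.1))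
    rw [hempty, eulerChar_empty]
  · exact eulerChar_eq_sum_inter_sign_of_neg_of_pos hconv hC ha hℓa hb hℓb

lemma eulerChar_eq_sum_inter_signVector_fin [FiniteDimensional ℝ E] {m : ℕ}
    (f : Fin m → E →ᵃ[ℝ] ℝ) {C : Set E} (hconv : Convex ℝ C) (hC : IsRelativelyOpen C) :
    eulerChar C =
      ∑ σ : Fin m → SignType, eulerChar (C ∩ {x | ∀ i, SignType.sign (f i x) = σ i}) := by
  induction m generalizing C with
  | zero => simp
  | succ m ih =>
    rw [eulerChar_eq_sum_inter_sign hconv hC (f 0),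
      ← (Fin.consEquiv fun _ => SignType).sum_comp, Fintype.sum_prod_type]
    refine Finset.sum_congr rfl fun s _ => ?_
    rw [ih (fun i => f i.succ) (hconv.inter (convex_setOf_sign_eq _ s)) (hC.inter_sign_eq _ s)]
    refine Finset.sum_congr rfl fun σ _ => congrArg eulerChar ?_
    ext x
    simp [Fin.consEquiv, Fin.forall_fin_succ, and_assoc]

lemma eulerChar_eq_sum_inter_signVector [FiniteDimensional ℝ E] {ι : Type*} [Fintype ι]
    [DecidableEq ι] (f : ι → E →ᵃ[ℝ] ℝ) {C : Set E} (hconv : Convex ℝ C)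
    (hC : IsRelativelyOpen C) :
    eulerChar C =
      ∑ σ : ι → SignType, eulerChar (C ∩ {x | ∀ i, SignType.sign (f i x) = σ i}) := by
  let e := Fintype.equivFin ι
  rw [eulerChar_eq_sum_inter_signVector_fin (fun i => f (e.symm i)) hconv hC,
    ← (Equiv.arrowCongr e (Equiv.refl SignType)).sum_comp]
  simp [e.symm.forall_congr_left]

end RelativelyOpen

section Arrangement

variable {𝒜}

lemma Flat.mem_iff {X : Flat 𝒜} {x : V n} :
    x ∈ X.1 ↔ ∀ ℓ : Idx 𝒜, X.1 ⊆ hypSet ℓ.1 → ℓ.1 x = 0 := by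
  conv_lhs => rw [flat_eq_inter 𝒜 X]
  simp [hypSet]

lemma mem_supp_iff {F : Face 𝒜} {x : V n} :
    x ∈ (supp 𝒜 F).1 ↔ ∀ ℓ : Idx 𝒜, F.sgn ℓ = 0 → ℓ.1 x = 0 := by
  simp [supp, hypSet]

lemma Flat.convex (X : Flat 𝒜) : Convex ℝ X.1 := by
  rw [flat_eq_inter 𝒜 X]
  exact convex_iInter fun ℓ => convex_iInter fun _ =>
    (convex_singleton (0 : ℝ)).affine_preimage ℓ.1

lemma Flat.isRelativelyOpen (X : Flat 𝒜) : IsRelativelyOpen X.1 := fun x hx w hw =>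
  Filter.Eventually.of_forall fun t => Flat.mem_iff.2 fun ℓ hℓ => by
    have hw0 : ℓ.1.linear w = 0 := vectorSpan_le_ker_linear hℓ hw
    rw [map_add_smul_eq, Flat.mem_iff.1 hx ℓ hℓ, hw0, smul_zero, add_zero]

lemma Flat.exists_isMin_le (X : Flat 𝒜) : ∃ M : Flat 𝒜, M ≤ X ∧ IsMin M := by
  obtain ⟨M, hMX, hM⟩ := Finite.exists_le_minimal (p := fun _ : Flat 𝒜 => True) (a := X) trivial
  exact ⟨M, hMX, minimal_true.1 hM⟩

lemma Flat.le_dimS {d : ℕ} (hd : ∀ M : Flat 𝒜, IsMin M → d ≤ dimS M.1) (X : Flat 𝒜) :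
    d ≤ dimS X.1 := by
  obtain ⟨M, hMX, hM⟩ := X.exists_isMin_le
  exact (hd M hM).trans (Submodule.finrank_mono (vectorSpan_mono ℝ hMX))

lemma Face.carrier_subset_supp (F : Face 𝒜) : F.carrier ⊆ (supp 𝒜 F).1 := fun _ hx =>
  mem_supp_iff.2 fun ℓ hℓ => sign_eq_zero_iff.1 ((hx ℓ).trans hℓ)

lemma Face.vectorSpan_carrier (F : Face 𝒜) :
    vectorSpan ℝ F.carrier = vectorSpan ℝ (supp 𝒜 F).1 := by
  refine (vectorSpan_mono ℝ F.carrier_subset_supp).antisymm fun w hw => ?_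
  obtain ⟨x, hx⟩ := F.nonempty
  refine mem_vectorSpan_of_eventually_mem hx (Filter.eventually_all.2 fun ℓ => ?_)
  have hlin : ℓ.1 x = 0 → ℓ.1.linear w = 0 := fun h0 =>
    vectorSpan_le_ker_linear (fun y hy => mem_supp_iff.1 hy ℓ (by rw [← hx ℓ, h0, sign_zero])) hw
  exact (eventually_sign_add_smul_eq ℓ.1 hlin).mono fun _ ht => ht.trans (hx ℓ)

lemma Face.dimS_carrier (F : Face 𝒜) : dimS F.carrier = dimS (supp 𝒜 F).1 := by
  rw [dimS, dimS, F.vectorSpan_carrier]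

lemma supp_subset_iff_inter_carrier_nonempty {F : Face 𝒜} {X : Flat 𝒜} :
    (supp 𝒜 F).1 ⊆ X.1 ↔ (X.1 ∩ F.carrier).Nonempty := by
  constructor
  · intro h
    obtain ⟨x, hx⟩ := F.nonempty
    exact ⟨x, h (F.carrier_subset_supp hx), hx⟩
  · rintro ⟨x, hxX, hxF⟩ y hy
    refine Flat.mem_iff.2 fun ℓ hℓ => mem_supp_iff.1 hy ℓ ?_
    rw [← hxF ℓ, hℓ hxX, sign_zero]

open Classical in
lemma eulerChar_inter_carrier (X : Flat 𝒜) (F : Face 𝒜) :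
    eulerChar (X.1 ∩ F.carrier) =
      if (supp 𝒜 F).1 ⊆ X.1 then (-1) ^ dimS F.carrier else 0 := by
  split_ifs with h
  · rw [Set.inter_eq_right.2 (F.carrier_subset_supp.trans h)]
    exact eulerChar_of_nonempty F.nonempty
  · rw [supp_subset_iff_inter_carrier_nonempty, Set.not_nonempty_iff_eq_empty] at h
    rw [h, eulerChar_empty]

lemma eulerChar_eq_sum_inter_carrier {C : Set (V n)} (hconv : Convex ℝ C)
    (hC : IsRelativelyOpen C) :
    eulerChar C = ∑ F : Face 𝒜, eulerChar (C ∩ F.carrier) := by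
  classical
  rw [eulerChar_eq_sum_inter_signVector (fun ℓ : Idx 𝒜 => ℓ.1) hconv hC]
  refine (Fintype.sum_of_injective Face.sgn (fun _ _ => Face.ext) _ _ (fun σ hσ => ?_)
    fun F => rfl).symm
  have hempty : faceSet 𝒜 σ = ∅ :=
    Set.not_nonempty_iff_eq_empty.1 fun hne => hσ ⟨⟨σ, hne⟩, rfl⟩
  change eulerChar (C ∩ faceSet 𝒜 σ) = 0
  rw [hempty, Set.inter_empty, eulerChar_empty]

open Classical in
lemma Flat.neg_one_pow_dimS_eq_sum (X : Flat 𝒜) :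
    (-1 : ℤ) ^ dimS X.1 =
      ∑ F : Face 𝒜, if (supp 𝒜 F).1 ⊆ X.1 then (-1) ^ dimS F.carrier else 0 := by
  simp_rw [← eulerChar_inter_carrier, ← eulerChar_eq_sum_inter_carrier X.convex X.isRelativelyOpen]
  exact (eulerChar_of_nonempty X.2.1).symm

end Arrangement

/-- **Proposition.** The Takeuchi element `τ = Σ_F (-1)^{rk F} H_F` (sum over all
faces) is characteristic of parameter `-1`. -/
theorem takeuchi_isCharacteristic {n : ℕ} (𝒜 : Finset (AffForm n))
    (h𝒜 : ∀ ℓ ∈ 𝒜, ℓ.linear ≠ 0)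
    (d : ℕ) (hd : ∀ X : Flat 𝒜, IsMin X → dimS X.1 = d) :
    IsCharacteristic 𝒜 d
      (fun F => (-1 : ℝ) ^ (dimS (Face.carrier 𝒜 F) - d)) (-1) := by
  classical
  intro X
  have hle : ∀ Y : Flat 𝒜, d ≤ dimS Y.1 := Flat.le_dimS fun M hM => (hd M hM).ge
  have hrank : ∀ {k : ℕ}, d ≤ k → (-1 : ℝ) ^ (k - d) = (-1) ^ k * ((-1) ^ d)⁻¹ :=
    pow_sub₀ _ (by norm_num)
  have hsum : (-1 : ℝ) ^ dimS X.1 =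
      ∑ F : Face 𝒜, if (supp 𝒜 F).1 ⊆ X.1 then (-1) ^ dimS F.carrier else 0 :=
    mod_cast X.neg_one_pow_dimS_eq_sum
  rw [hrank (hle X), hsum, Finset.sum_mul]
  refine Finset.sum_congr rfl fun F _ => ?_
  have hF : d ≤ dimS F.carrier := F.dimS_carrier ▸ hle (supp 𝒜 F)
  simp only [hrank hF, ite_mul, zero_mul]

end CharElts
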